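/- arXiv:1608.07855 — 2 statements merged into one kernel-verified Lean document; each statement's English description precedes it below -/
import Mathlib

section
/- Let G be a finite simple graph, Z a cycle in G, λ : E(G) → ℤ/2 an edge labeling, and B a bridge of G with respect to Z containing a vertex v ∉ V(Z). Let x, y ∈ V(B) ∩ V(Z) be two distinct vertices, and suppose that all proper walks in B from x to v have the same λ-value and that all proper walks in B from y to v have the same λ-value (i.e., |L_v(x)| = |L_v(y)| = 1). Then any two proper walks in B from x to y have the same λ-value. -/
open SimpleGraph

variable {V : Type*}

/-- The `λ`-value of a walk: the sum in `ℤ/2`, over the edges of the walk counted with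
multiplicity, of their labels. -/
def walkLambda (lam : Sym2 V → ZMod 2) {G : SimpleGraph V} {x y : V} (w : G.Walk x y) :
    ZMod 2 :=
  (w.edges.map lam).sum

/-- `b` can be reached from `a` by a walk in `G` all of whose vertices avoid `Zv`. -/
def ReachAvoiding (G : SimpleGraph V) (Zv : Set V) (a b : V) : Prop :=
  ∃ w : G.Walk a b, ∀ x ∈ w.support, x ∉ Zv

/-- `B` is a bridge of `G` with respect to a cycle with vertex set `Zv` and edge set `Ze`:
either a single edge not of the cycle together with its two endpoints, both on the cycle,
or a connected component of `G − Zv` together with all edges (and their endpoints on the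
cycle) joining it to `Zv`. -/
def IsBridgeOf (G : SimpleGraph V) (Zv : Set V) (Ze : Set (Sym2 V)) (B : G.Subgraph) :
    Prop :=
  (∃ u v, G.Adj u v ∧ s(u, v) ∉ Ze ∧ u ∈ Zv ∧ v ∈ Zv ∧
      B.verts = {u, v} ∧ ∀ a b, B.Adj a b ↔ s(a, b) = s(u, v)) ∨
  (∃ a, a ∉ Zv ∧
      B.verts = {b | ReachAvoiding G Zv a b} ∪
        {z | z ∈ Zv ∧ ∃ c, ReachAvoiding G Zv a c ∧ G.Adj c z} ∧
      ∀ x y, B.Adj x y ↔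
        G.Adj x y ∧ (ReachAvoiding G Zv a x ∨ ReachAvoiding G Zv a y))

/-- `w` is a proper walk lying in the subgraph `B`, with respect to a cycle with vertex
set `Zv` and edge set `Ze`: the walk lies in `B`, none of its vertices lies on the cycle
except possibly its endpoints, and none of its edges is an edge of the cycle. -/
def IsProperWalkIn {G : SimpleGraph V} (B : G.Subgraph) (Zv : Set V) (Ze : Set (Sym2 V))
    {x y : V} (w : G.Walk x y) : Prop :=
  (∀ u ∈ w.support, u ∈ B.verts) ∧ (∀ e ∈ w.edges, e ∈ B.edgeSet) ∧
    (∀ u ∈ w.support, u ∈ Zv → u = x ∨ u = y) ∧ (∀ e ∈ w.edges, e ∉ Ze)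

/-- The set of `λ`-values of proper walks in `B` from `x` to the reference vertex `w`. -/
def labelSet {G : SimpleGraph V} (B : G.Subgraph) (Zv : Set V) (Ze : Set (Sym2 V))
    (lam : Sym2 V → ZMod 2) (x w : V) : Set (ZMod 2) :=
  {t | ∃ ω : G.Walk x w, IsProperWalkIn B Zv Ze ω ∧ walkLambda lam ω = t}

/-- A graph is 2-connected: it has at least three vertices, it is connected, and it
remains connected after the deletion of any single vertex. -/
def TwoConnected (G : SimpleGraph V) : Prop :=
  3 ≤ Nat.card V ∧ G.Connected ∧ ∀ v : V, (G.induce {u | u ≠ v}).Connected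

/-!
Every edge of the bridge `B` has an end off the cycle `Z`, and prepending to a proper walk ending
at `v ∉ V(Z)` an edge of `B` that leads off `Z` gives a proper walk again. So for an edge `uc` of
`B` with `c ∉ V(Z)` we have `λ(uc) + L_v(c) ⊆ L_v(u)`. Since `B` minus `Z` is connected, the
singleton property therefore spreads from `L_v(x)` to `L_v(c)` for all `c ∈ V(B) \ V(Z)`. Writing
`L_v(u) = {φ u}` for these vertices and for `x` and `y`, the inclusion becomes
`λ(uc) = φ u + φ c`, and along a proper walk from `x` to `y` the labels telescope to `φ x + φ y`.
-/

section walkLambda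

variable {G : SimpleGraph V} (lam : Sym2 V → ZMod 2)

theorem walkLambda_cons {x y z : V} (h : G.Adj x y) (w : G.Walk y z) :
    walkLambda lam (Walk.cons h w) = lam s(x, y) + walkLambda lam w := by
  simp [walkLambda]

theorem walkLambda_eq_add_of_forall_edges {φ : V → ZMod 2} {x y : V} (w : G.Walk x y)
    (hφ : ∀ a b, s(a, b) ∈ w.edges → lam s(a, b) = φ a + φ b) :
    walkLambda lam w = φ x + φ y := by
  induction w with
  | nil => simp [walkLambda, CharTwo.add_self_eq_zero]
  | @cons a b c h w ih =>
    have hab : lam s(a, b) = φ a + φ b := hφ a b (by simp)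
    have hbc : walkLambda lam w = φ b + φ c :=
      ih fun p q hpq => hφ p q (by simp [hpq])
    rw [walkLambda_cons, hab, hbc, add_assoc, CharTwo.add_cancel_left]

end walkLambda

namespace ReachAvoiding

variable {G : SimpleGraph V} {Zv : Set V} {a b c : V}

theorem symm (h : ReachAvoiding G Zv a b) : ReachAvoiding G Zv b a := by
  obtain ⟨w, hw⟩ := h
  exact ⟨w.reverse, by simpa using hw⟩

theorem trans (hab : ReachAvoiding G Zv a b) (hbc : ReachAvoiding G Zv b c) :
    ReachAvoiding G Zv a c := by
  obtain ⟨p, hp⟩ := hab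
  obtain ⟨q, hq⟩ := hbc
  exact ⟨p.append q, fun u hu => ((p.mem_support_append_iff q).1 hu).elim (hp u) (hq u)⟩

theorem concat (hab : ReachAvoiding G Zv a b) (hbc : G.Adj b c) (hc : c ∉ Zv) :
    ReachAvoiding G Zv a c := by
  obtain ⟨w, hw⟩ := hab
  refine ⟨w.concat hbc, fun u hu => ?_⟩
  rw [Walk.support_concat, List.mem_append, List.mem_singleton] at hu
  rcases hu with hu | rfl
  exacts [hw u hu, hc]

theorem notMem_right (h : ReachAvoiding G Zv a b) : b ∉ Zv := by
  obtain ⟨w, hw⟩ := h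
  exact hw b w.end_mem_support

end ReachAvoiding

/-- One step along an edge of `B` onto a vertex off `Zv`; the vertex it starts from may lie
on `Zv`. -/
def StepOff {G : SimpleGraph V} (B : G.Subgraph) (Zv : Set V) (u c : V) : Prop :=
  B.Adj u c ∧ c ∉ Zv

section labelSet

variable {G : SimpleGraph V} {B : G.Subgraph} {Zv : Set V} {Ze : Set (Sym2 V)}
  {lam : Sym2 V → ZMod 2} {u c v : V}

theorem IsProperWalkIn.nil (hv : v ∈ B.verts) :
    IsProperWalkIn B Zv Ze (Walk.nil : G.Walk v v) := by
  simp [IsProperWalkIn, hv]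

theorem IsProperWalkIn.cons (hZe : ∀ e ∈ Ze, ∀ p ∈ e, p ∈ Zv) (hv : v ∉ Zv)
    (huc : StepOff B Zv u c) {w : G.Walk c v} (hw : IsProperWalkIn B Zv Ze w) :
    IsProperWalkIn B Zv Ze (Walk.cons huc.1.adj_sub w) := by
  obtain ⟨hverts, hedges, hends, hcycle⟩ := hw
  have hwZ : ∀ p ∈ w.support, p ∉ Zv := by
    intro p hp hpZ
    rcases hends p hp hpZ with rfl | rfl
    exacts [huc.2 hpZ, hv hpZ]
  have hucZe : s(u, c) ∉ Ze := fun h => huc.2 (hZe _ h c (Sym2.mem_mk_right u c))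
  simp only [IsProperWalkIn, Walk.support_cons, Walk.edges_cons, List.forall_mem_cons]
  exact ⟨⟨B.edge_vert huc.1, hverts⟩, ⟨huc.1, hedges⟩,
    ⟨fun _ => Or.inl trivial, fun p hp hpZ => absurd hpZ (hwZ p hp)⟩, ⟨hucZe, hcycle⟩⟩

theorem labelSet_subsingleton_iff :
    (labelSet B Zv Ze lam u v).Subsingleton ↔ ∀ w₁ w₂ : G.Walk u v,
      IsProperWalkIn B Zv Ze w₁ → IsProperWalkIn B Zv Ze w₂ →
      walkLambda lam w₁ = walkLambda lam w₂ := by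
  constructor
  · exact fun h w₁ w₂ h₁ h₂ => h ⟨w₁, h₁, rfl⟩ ⟨w₂, h₂, rfl⟩
  · rintro h _ ⟨w₁, h₁, rfl⟩ _ ⟨w₂, h₂, rfl⟩
    exact h w₁ w₂ h₁ h₂

theorem add_mem_labelSet (hZe : ∀ e ∈ Ze, ∀ p ∈ e, p ∈ Zv) (hv : v ∉ Zv)
    (huc : StepOff B Zv u c) {t : ZMod 2} (ht : t ∈ labelSet B Zv Ze lam c v) :
    lam s(u, c) + t ∈ labelSet B Zv Ze lam u v := by
  obtain ⟨w, hw, rfl⟩ := ht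
  exact ⟨_, hw.cons hZe hv huc, walkLambda_cons lam _ w⟩

theorem labelSet_nonempty_of_reflTransGen (hZe : ∀ e ∈ Ze, ∀ p ∈ e, p ∈ Zv)
    (hvB : v ∈ B.verts) (hv : v ∉ Zv) (h : Relation.ReflTransGen (StepOff B Zv) u v) :
    (labelSet B Zv Ze lam u v).Nonempty := by
  induction h using Relation.ReflTransGen.head_induction_on with
  | refl => exact ⟨_, Walk.nil, IsProperWalkIn.nil hvB, rfl⟩
  | head hac _ ih =>
    obtain ⟨t, ht⟩ := ih
    exact ⟨_, add_mem_labelSet hZe hv hac ht⟩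

theorem labelSet_subsingleton_of_reflTransGen (hZe : ∀ e ∈ Ze, ∀ p ∈ e, p ∈ Zv) (hv : v ∉ Zv)
    (hu : (labelSet B Zv Ze lam u v).Subsingleton)
    (h : Relation.ReflTransGen (StepOff B Zv) u c) :
    (labelSet B Zv Ze lam c v).Subsingleton := by
  induction h with
  | refl => exact hu
  | tail _ hbc ih =>
    intro s hs t ht
    exact add_left_cancel (ih (add_mem_labelSet hZe hv hbc hs) (add_mem_labelSet hZe hv hbc ht))

theorem label_eq_add_of_labelSet_eq_singleton (hZe : ∀ e ∈ Ze, ∀ p ∈ e, p ∈ Zv) (hv : v ∉ Zv)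
    (huc : StepOff B Zv u c) {s t : ZMod 2} (hu : labelSet B Zv Ze lam u v = {s})
    (hc : labelSet B Zv Ze lam c v = {t}) : lam s(u, c) = s + t := by
  have hmem : lam s(u, c) + t ∈ labelSet B Zv Ze lam u v :=
    add_mem_labelSet hZe hv huc (hc ▸ Set.mem_singleton t)
  have hst : lam s(u, c) + t = s := by rwa [hu] at hmem
  rw [← hst, CharTwo.add_cancel_right]

end labelSet

/-- `B` consists of the component of `v` in `G − Zv` and all edges joining it to `Zv`: the second
kind of bridge in `IsBridgeOf`, with `v` as the base point of the component. -/
structure IsComponentBridge (G : SimpleGraph V) (Zv : Set V) (v : V) (B : G.Subgraph) :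
    Prop where
  mem_verts_iff : ∀ u, u ∈ B.verts ↔
    ReachAvoiding G Zv v u ∨ u ∈ Zv ∧ ∃ c, ReachAvoiding G Zv v c ∧ G.Adj c u
  adj_iff : ∀ p q, B.Adj p q ↔
    G.Adj p q ∧ (ReachAvoiding G Zv v p ∨ ReachAvoiding G Zv v q)

theorem IsBridgeOf.isComponentBridge {G : SimpleGraph V} {Zv : Set V} {Ze : Set (Sym2 V)}
    {B : G.Subgraph} (hB : IsBridgeOf G Zv Ze B) {v : V} (hvB : v ∈ B.verts) (hv : v ∉ Zv) :
    IsComponentBridge G Zv v B := by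
  rcases hB with ⟨p, q, -, -, hp, hq, hverts, -⟩ | ⟨a, -, hverts, hadj⟩
  · rw [hverts] at hvB
    rcases hvB with rfl | rfl
    exacts [absurd hp hv, absurd hq hv]
  · rw [hverts] at hvB
    have hav : ReachAvoiding G Zv a v := hvB.resolve_right fun h => hv h.1
    have hbase : ∀ u, ReachAvoiding G Zv a u ↔ ReachAvoiding G Zv v u :=
      fun u => ⟨hav.symm.trans, hav.trans⟩
    simp only [hbase] at hverts hadj
    exact ⟨fun u => by rw [hverts]; rfl, hadj⟩

namespace IsComponentBridge

variable {G : SimpleGraph V} {B : G.Subgraph} {Zv : Set V} {Ze : Set (Sym2 V)}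
  {lam : Sym2 V → ZMod 2} {v x y b c : V}

theorem reachAvoiding (hB : IsComponentBridge G Zv v B) (hcB : c ∈ B.verts) (hc : c ∉ Zv) :
    ReachAvoiding G Zv v c :=
  ((hB.mem_verts_iff c).1 hcB).resolve_right fun h => hc h.1

theorem notMem_or_notMem_of_adj (hB : IsComponentBridge G Zv v B) (hbc : B.Adj b c) :
    b ∉ Zv ∨ c ∉ Zv :=
  ((hB.adj_iff b c).1 hbc).2.imp ReachAvoiding.notMem_right ReachAvoiding.notMem_right

theorem reflTransGen_stepOff_of_reachAvoiding (hB : IsComponentBridge G Zv v B)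
    (hvb : ReachAvoiding G Zv v b) (hbc : ReachAvoiding G Zv b c) :
    Relation.ReflTransGen (StepOff B Zv) b c := by
  obtain ⟨w, hw⟩ := hbc
  induction w with
  | nil => exact .refl
  | @cons b d c hbd w ih =>
    rw [Walk.support_cons, List.forall_mem_cons] at hw
    have hd : d ∉ Zv := hw.2 d w.start_mem_support
    exact .head ⟨(hB.adj_iff b d).2 ⟨hbd, .inl hvb⟩, hd⟩ (ih (hvb.concat hbd hd) hw.2)

theorem reflTransGen_stepOff (hB : IsComponentBridge G Zv v B) (hbB : b ∈ B.verts)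
    (hcB : c ∈ B.verts) (hc : c ∉ Zv) : Relation.ReflTransGen (StepOff B Zv) b c := by
  have hvc : ReachAvoiding G Zv v c := hB.reachAvoiding hcB hc
  rcases (hB.mem_verts_iff b).1 hbB with hvb | ⟨-, d, hvd, hdb⟩
  · exact hB.reflTransGen_stepOff_of_reachAvoiding hvb (hvb.symm.trans hvc)
  · have hbd : StepOff B Zv b d :=
      ⟨(hB.adj_iff b d).2 ⟨hdb.symm, .inr hvd⟩, hvd.notMem_right⟩
    exact .head hbd (hB.reflTransGen_stepOff_of_reachAvoiding hvd (hvd.symm.trans hvc))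

theorem label_eq_add_of_adj (hB : IsComponentBridge G Zv v B) (hZe : ∀ e ∈ Ze, ∀ p ∈ e, p ∈ Zv)
    (hv : v ∉ Zv) (hbc : B.Adj b c) {s t : ZMod 2} (hb : labelSet B Zv Ze lam b v = {s})
    (hc : labelSet B Zv Ze lam c v = {t}) : lam s(b, c) = s + t := by
  rcases hB.notMem_or_notMem_of_adj hbc with hbZ | hcZ
  · rw [Sym2.eq_swap, add_comm]
    exact label_eq_add_of_labelSet_eq_singleton hZe hv ⟨hbc.symm, hbZ⟩ hc hb
  · exact label_eq_add_of_labelSet_eq_singleton hZe hv ⟨hbc, hcZ⟩ hb hc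

theorem exists_labelSet_eq_singleton (hB : IsComponentBridge G Zv v B)
    (hZe : ∀ e ∈ Ze, ∀ p ∈ e, p ∈ Zv) (hvB : v ∈ B.verts) (hv : v ∉ Zv) (hxB : x ∈ B.verts)
    (hLx : (labelSet B Zv Ze lam x v).Subsingleton)
    (hLy : (labelSet B Zv Ze lam y v).Subsingleton) (hbB : b ∈ B.verts)
    (hb : b ∈ Zv → b = x ∨ b = y) : ∃ t, labelSet B Zv Ze lam b v = {t} := by
  rw [Set.exists_eq_singleton_iff_nonempty_subsingleton]
  refine ⟨labelSet_nonempty_of_reflTransGen hZe hvB hv (hB.reflTransGen_stepOff hbB hvB hv), ?_⟩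
  by_cases hbZ : b ∈ Zv
  · rcases hb hbZ with rfl | rfl
    exacts [hLx, hLy]
  · exact labelSet_subsingleton_of_reflTransGen hZe hv hLx (hB.reflTransGen_stepOff hxB hbB hbZ)

end IsComponentBridge

theorem statement5_general {G : SimpleGraph V} {Zv : Set V} {Ze : Set (Sym2 V)}
    (hZe : ∀ e ∈ Ze, ∀ p ∈ e, p ∈ Zv) {B : G.Subgraph} (hB : IsBridgeOf G Zv Ze B)
    {lam : Sym2 V → ZMod 2} {v x y : V} (hvB : v ∈ B.verts) (hv : v ∉ Zv)
    (hLx : (labelSet B Zv Ze lam x v).Subsingleton)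
    (hLy : (labelSet B Zv Ze lam y v).Subsingleton) :
    (labelSet B Zv Ze lam x y).Subsingleton := by
  have hBv : IsComponentBridge G Zv v B := hB.isComponentBridge hvB hv
  rw [labelSet_subsingleton_iff]
  intro w₁ w₂ hw₁ hw₂
  have hxB : x ∈ B.verts := hw₁.1 x w₁.start_mem_support
  have hsingle : ∀ b, b ∈ B.verts ∧ (b ∈ Zv → b = x ∨ b = y) →
      ∃ t, labelSet B Zv Ze lam b v = {t} :=
    fun b hb => hBv.exists_labelSet_eq_singleton hZe hvB hv hxB hLx hLy hb.1 hb.2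
  choose! φ hφ using hsingle
  have htelescope : ∀ w : G.Walk x y, IsProperWalkIn B Zv Ze w →
      walkLambda lam w = φ x + φ y := by
    rintro w ⟨hverts, hedges, hends, -⟩
    have hφw : ∀ b ∈ w.support, labelSet B Zv Ze lam b v = {φ b} :=
      fun b hb => hφ b ⟨hverts b hb, hends b hb⟩
    exact walkLambda_eq_add_of_forall_edges lam w fun p q hpq =>
      hBv.label_eq_add_of_adj hZe hv (hedges _ hpq) (hφw p (w.fst_mem_support_of_mem_edges hpq))
        (hφw q (w.snd_mem_support_of_mem_edges hpq))
  rw [htelescope w₁ hw₁, htelescope w₂ hw₂]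

/-- For a bridge `B` with a reference vertex `v ∉ V(Z)` and distinct
`x, y ∈ V(B) ∩ V(Z)`, if all proper walks in `B` from `x` to `v` have the same `λ`-value
and likewise for `y`, then any two proper walks in `B` from `x` to `y` have the same
`λ`-value. -/
theorem statement5 [Fintype V] (G : SimpleGraph V) (lam : Sym2 V → ZMod 2)
    (z₀ : V) (Z : G.Walk z₀ z₀) (hZ : Z.IsCycle) (B : G.Subgraph)
    (hB : IsBridgeOf G {u | u ∈ Z.support} {e | e ∈ Z.edges} B)
    (v : V) (hvB : v ∈ B.verts) (hvZ : v ∉ Z.support)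
    (x y : V) (hxB : x ∈ B.verts) (hxZ : x ∈ Z.support)
    (hyB : y ∈ B.verts) (hyZ : y ∈ Z.support) (hxy : x ≠ y)
    (hLx : ∀ w₁ w₂ : G.Walk x v,
      IsProperWalkIn B {u | u ∈ Z.support} {e | e ∈ Z.edges} w₁ →
      IsProperWalkIn B {u | u ∈ Z.support} {e | e ∈ Z.edges} w₂ →
      walkLambda lam w₁ = walkLambda lam w₂)
    (hLy : ∀ w₁ w₂ : G.Walk y v,
      IsProperWalkIn B {u | u ∈ Z.support} {e | e ∈ Z.edges} w₁ →
      IsProperWalkIn B {u | u ∈ Z.support} {e | e ∈ Z.edges} w₂ →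
      walkLambda lam w₁ = walkLambda lam w₂) :
    ∀ w₁ w₂ : G.Walk x y,
      IsProperWalkIn B {u | u ∈ Z.support} {e | e ∈ Z.edges} w₁ →
      IsProperWalkIn B {u | u ∈ Z.support} {e | e ∈ Z.edges} w₂ →
      walkLambda lam w₁ = walkLambda lam w₂ := by
  have hZe : ∀ e ∈ Z.edges, ∀ p ∈ e, p ∈ Z.support :=
    fun _ he _ hp => Walk.mem_support_of_mem_edges he hp
  rw [← labelSet_subsingleton_iff] at hLx hLy ⊢
  exact statement5_general hZe hB hvB hvZ hLx hLy
end

section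
/- Let G be a finite simple graph, Z a cycle in G, λ : E(G) → ℤ/2 an edge labeling, and B a bridge of G with respect to Z. Let u, v ∈ V(B) \ V(Z) and let γ be a proper walk in B from u to v. Then for every x ∈ V(B) ∩ V(Z), the label sets computed from the two reference vertices satisfy L_u(x) = { λ(γ) + t : t ∈ L_v(x) }. In particular, the labelling of V(B) ∩ V(Z) determined by the reference vertex u coincides with the labelling determined by v after adding the constant λ(γ) to every label, so each bridge admits exactly two valid labellings, obtained from one another by swapping the labels 0 and 1. -/
open SimpleGraph

variable {V : Type*}

/-!
Proper walks can be concatenated at a vertex off the cycle and can be reversed, and the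
`λ`-value is additive under concatenation and invariant under reversal. Hence appending `γ` maps
proper walks `x → u` to proper walks `x → v` and adds `λ(γ)` to their labels; appending the
reverse of `γ` maps proper walks back and adds the same constant, which is its own inverse in `ℤ/2`.
-/

section

variable {G : SimpleGraph V} {B : G.Subgraph} {Zv : Set V} {Ze : Set (Sym2 V)} {x u v : V}

theorem walkLambda_append (lam : Sym2 V → ZMod 2) (p : G.Walk x u) (q : G.Walk u v) :
    walkLambda lam (p.append q) = walkLambda lam p + walkLambda lam q := by
  simp [walkLambda, Walk.edges_append]

theorem walkLambda_reverse (lam : Sym2 V → ZMod 2) (p : G.Walk u v) :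
    walkLambda lam p.reverse = walkLambda lam p := by
  simp [walkLambda, Walk.edges_reverse]

theorem IsProperWalkIn.append {p : G.Walk x u} {q : G.Walk u v}
    (hp : IsProperWalkIn B Zv Ze p) (hq : IsProperWalkIn B Zv Ze q) (hu : u ∉ Zv) :
    IsProperWalkIn B Zv Ze (p.append q) := by
  obtain ⟨hp_verts, hp_edges, hp_inner, hp_avoid⟩ := hp
  obtain ⟨hq_verts, hq_edges, hq_inner, hq_avoid⟩ := hq
  simp only [IsProperWalkIn, Walk.mem_support_append_iff, Walk.edges_append, List.mem_append]
  refine ⟨fun a ha => ha.elim (hp_verts a) (hq_verts a),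
    fun e he => he.elim (hp_edges e) (hq_edges e), ?_,
    fun e he => he.elim (hp_avoid e) (hq_avoid e)⟩
  rintro a (ha | ha) haZ
  · exact Or.inl ((hp_inner a ha haZ).resolve_right fun hau => hu (hau ▸ haZ))
  · exact Or.inr ((hq_inner a ha haZ).resolve_left fun hau => hu (hau ▸ haZ))

theorem IsProperWalkIn.reverse {p : G.Walk u v} (hp : IsProperWalkIn B Zv Ze p) :
    IsProperWalkIn B Zv Ze p.reverse := by
  obtain ⟨h_verts, h_edges, h_inner, h_avoid⟩ := hp
  simp only [IsProperWalkIn, Walk.support_reverse, Walk.edges_reverse, List.mem_reverse]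
  exact ⟨h_verts, h_edges, fun a ha haZ => (h_inner a ha haZ).symm, h_avoid⟩

theorem walkLambda_add_mem_labelSet {lam : Sym2 V → ZMod 2} {γ : G.Walk u v}
    (hγ : IsProperWalkIn B Zv Ze γ) (hu : u ∉ Zv) {t : ZMod 2}
    (ht : t ∈ labelSet B Zv Ze lam x u) :
    walkLambda lam γ + t ∈ labelSet B Zv Ze lam x v := by
  obtain ⟨ω, hω, rfl⟩ := ht
  exact ⟨ω.append γ, hω.append hγ hu, by rw [walkLambda_append, add_comm]⟩

theorem statement10_general (lam : Sym2 V → ZMod 2) (hu : u ∉ Zv) (hv : v ∉ Zv)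
    (γ : G.Walk u v) (hγ : IsProperWalkIn B Zv Ze γ) :
    labelSet B Zv Ze lam x u =
      (fun t => walkLambda lam γ + t) '' labelSet B Zv Ze lam x v := by
  refine Set.Subset.antisymm (fun t ht => ?_) ?_
  · exact ⟨walkLambda lam γ + t, walkLambda_add_mem_labelSet hγ hu ht,
      CharTwo.add_cancel_left _ _⟩
  · rintro _ ⟨t, ht, rfl⟩
    simpa only [walkLambda_reverse] using walkLambda_add_mem_labelSet hγ.reverse hv ht

end

/-- For a bridge `B`, two reference vertices `u, v ∈ V(B) \ V(Z)`, and a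
proper walk `γ` in `B` from `u` to `v`, the label sets computed from the two reference
vertices satisfy `L_u(x) = { λ(γ) + t : t ∈ L_v(x) }` for every `x ∈ V(B) ∩ V(Z)`; that
is, the labelling determined by `u` is obtained from the one determined by `v` by adding
the constant `λ(γ)` to every label. -/
theorem statement10 [Fintype V] (G : SimpleGraph V) (lam : Sym2 V → ZMod 2)
    (z₀ : V) (Z : G.Walk z₀ z₀) (hZ : Z.IsCycle) (B : G.Subgraph)
    (hB : IsBridgeOf G {u | u ∈ Z.support} {e | e ∈ Z.edges} B)
    (u v : V) (huB : u ∈ B.verts) (huZ : u ∉ Z.support)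
    (hvB : v ∈ B.verts) (hvZ : v ∉ Z.support)
    (γ : G.Walk u v) (hγ : IsProperWalkIn B {u | u ∈ Z.support} {e | e ∈ Z.edges} γ) :
    ∀ x, x ∈ B.verts → x ∈ Z.support →
      labelSet B {u | u ∈ Z.support} {e | e ∈ Z.edges} lam x u =
        (fun t => walkLambda lam γ + t) ''
          labelSet B {u | u ∈ Z.support} {e | e ∈ Z.edges} lam x v := by
  intro x _ _
  exact statement10_general lam huZ hvZ γ hγ
end
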